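/- For every ordered graph H_< there exists an unordered graph H' with the property that for every linear order ≺ on the vertex set of H', the ordered graph H'_≺ contains H_< as an induced ordered subgraph. -/

import Mathlib

/-!
Call a family of `k`-element edges linear if two distinct edges share at most one vertex. Placing a
copy of `H` on every edge of a linear family creates no new adjacency inside an edge, so each copy
is induced, however the copies are labelled. It remains to label them so that every order of the
vertices agrees with the labelling of some edge. A given order misses a uniformly random labelling
of all edges with probability `(1 - 1 / k!) ^ #edges`, and there are at most `n ^ n` orders on `n`
vertices. The `p ^ 2` nonvertical lines of the grid `Fin k × ZMod p` form a linear family on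
`n = k * p` vertices, and for a large prime `p` the union bound succeeds.
-/

open Filter Function

section LinearHypergraph

variable {L ι V W : Type*}

/-- A linear hypergraph with labelled edges: each edge `e l` comes with an enumeration of its
vertices by `ι`, and two edges with distinct indices share at most one vertex. -/
def IsLinearHypergraph (e : L → ι ↪ V) : Prop :=
  Pairwise fun l l' ↦ (Set.range (e l) ∩ Set.range (e l')).Subsingleton

namespace IsLinearHypergraph

variable {e : L → ι ↪ V}

lemma trans_embedding (he : IsLinearHypergraph e) (f : V ↪ W) :
    IsLinearHypergraph fun l ↦ (e l).trans f := by
  intro l l' hne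
  simpa only [Embedding.coe_trans, Set.range_comp, ← Set.image_inter f.injective]
    using (he hne).image f

lemma perm_trans (he : IsLinearHypergraph e) (c : L → Equiv.Perm ι) :
    IsLinearHypergraph fun l ↦ (c l).toEmbedding.trans (e l) := by
  intro l l' hne
  simpa only [Embedding.coe_trans, Equiv.coe_toEmbedding, EquivLike.range_comp] using he hne

theorem iSup_map_adj_iff (he : IsLinearHypergraph e) (H : SimpleGraph ι) (l : L) (u v : ι) :
    (⨆ l', H.map (e l')).Adj (e l u) (e l v) ↔ H.Adj u v := by
  rw [SimpleGraph.iSup_adj]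
  refine ⟨fun ⟨l', h⟩ ↦ ?_, fun h ↦ ⟨l, SimpleGraph.map_adj_apply.2 h⟩⟩
  obtain rfl : l = l' := by
    obtain ⟨i, j, -, hi, hj⟩ := (SimpleGraph.map_adj _ _ _ _).1 h
    by_contra hne
    exact h.ne (he hne ⟨⟨u, rfl⟩, i, hi⟩ ⟨⟨v, rfl⟩, j, hj⟩)
  exact SimpleGraph.map_adj_apply.1 h

end IsLinearHypergraph

end LinearHypergraph

section AffineLine

variable {ι K : Type*}

/-- The nonvertical line of slope `l.1` and intercept `l.2` in the grid `ι × K`, where `x i` is the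
abscissa of the column `i`. -/
def affineLine [Mul K] [Add K] (x : ι → K) (l : K × K) : ι ↪ ι × K where
  toFun i := (i, l.1 * x i + l.2)
  inj' _ _ h := congrArg Prod.fst h

theorem isLinearHypergraph_affineLine [CommRing K] [NoZeroDivisors K] {x : ι → K}
    (hx : Injective x) : IsLinearHypergraph (affineLine x) := by
  rintro ⟨a, b⟩ ⟨a', b'⟩ hne _ ⟨⟨i, rfl⟩, i', hi⟩ _ ⟨⟨j, rfl⟩, j', hj⟩
  obtain ⟨rfl, hi⟩ := Prod.mk.inj hi
  obtain ⟨rfl, hj⟩ := Prod.mk.inj hj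
  by_contra hij
  have hx_ne : x i' - x j' ≠ 0 := sub_ne_zero.2 fun h ↦ hij (congrArg _ (hx h))
  have slope_eq : a = a' := by
    refine sub_eq_zero.1 ((mul_eq_zero.1 ?_).resolve_right hx_ne)
    linear_combination hj - hi
  subst slope_eq
  exact hne (congrArg _ (add_left_cancel hi).symm)

end AffineLine

section Labelling

variable {L : Type*} [Fintype L]

lemma exists_forall_exists_apply_eq_of_card_mul_lt {F P : Type*} [Fintype F] [Fintype P]
    (s : F → L → P)
    (h : Fintype.card F * (Fintype.card P - 1) ^ Fintype.card L
      < Fintype.card P ^ Fintype.card L) :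
    ∃ c : L → P, ∀ f, ∃ l, s f l = c l := by
  classical
  let avoiding (f : F) : Finset (L → P) := Fintype.piFinset fun l ↦ Finset.univ.erase (s f l)
  have card_avoiding (f : F) :
      (avoiding f).card = (Fintype.card P - 1) ^ Fintype.card L := by
    simp [avoiding, Fintype.card_piFinset, Finset.card_erase_of_mem]
  have card_union_lt : (Finset.univ.biUnion avoiding).card < Fintype.card (L → P) :=
    calc (Finset.univ.biUnion avoiding).card
      _ ≤ Fintype.card F * (Fintype.card P - 1) ^ Fintype.card L :=
        Finset.card_biUnion_le_card_mul _ _ _ fun f _ ↦ (card_avoiding f).le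
      _ < Fintype.card P ^ Fintype.card L := h
      _ = Fintype.card (L → P) := Fintype.card_fun.symm
  obtain ⟨c, hc⟩ := Finset.exists_mem_notMem_of_card_lt_card (t := Finset.univ) card_union_lt
  refine ⟨c, fun f ↦ ?_⟩
  by_contra! hf
  exact hc.2 (by simpa [avoiding] using ⟨f, fun l ↦ (hf l).symm⟩)

theorem exists_perm_forall_strictTotalOrder_exists_increasing {V : Type*} [Fintype V] {k : ℕ}
    (e : L → Fin k ↪ V)
    (h : Fintype.card V ^ Fintype.card V * (k.factorial - 1) ^ Fintype.card L
      < k.factorial ^ Fintype.card L) :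
    ∃ c : L → Equiv.Perm (Fin k), ∀ r : V → V → Prop, IsStrictTotalOrder V r →
      ∃ l, ∀ i j, i < j → r (e l (c l i)) (e l (c l j)) := by
  classical
  obtain ⟨c, hc⟩ := exists_forall_exists_apply_eq_of_card_mul_lt
    (fun (f : V → Fin (Fintype.card V)) l ↦ Tuple.sort (f ∘ e l))
    (by simpa [Fintype.card_perm] using h)
  refine ⟨c, fun r _ ↦ ?_⟩
  let : LinearOrder V := linearOrderOfSTO r
  let rank : V ≃o Fin (Fintype.card V) := (monoEquivOfFin V rfl).symm
  obtain ⟨l, hl⟩ := hc rank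
  have rank_monotone : Monotone (rank ∘ e l ∘ c l) := hl ▸ Tuple.monotone_sort (rank ∘ e l)
  have rank_strictMono : StrictMono (rank ∘ e l ∘ c l) :=
    rank_monotone.strictMono_of_injective
      (rank.injective.comp ((e l).injective.comp (c l).injective))
  exact ⟨l, fun i j hij ↦ rank.lt_iff_lt.1 (rank_strictMono hij)⟩

end Labelling

section Growth

lemma eventually_mul_pow_mul_pow_lt_pow {a b : ℝ} (hab : |a| < b) (C : ℝ) (d : ℕ) :
    ∀ᶠ n : ℕ in atTop, (C * n) ^ d * a ^ n < b ^ n := by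
  have hb : 0 < b := (abs_nonneg a).trans_lt hab
  have isLittleO :=
    (isLittleO_pow_const_mul_const_pow_const_pow_of_norm_lt d hab).const_mul_left (C ^ d)
  filter_upwards [isLittleO.def one_half_pos] with n hn
  calc (C * n) ^ d * a ^ n
    _ = C ^ d * (n ^ d * a ^ n) := by ring
    _ ≤ ‖C ^ d * (n ^ d * a ^ n)‖ := Real.le_norm_self _
    _ ≤ 1 / 2 * ‖b ^ n‖ := hn
    _ = 1 / 2 * b ^ n := by rw [Real.norm_of_nonneg (by positivity)]
    _ < b ^ n := by linarith [pow_pos hb n]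

lemma eventually_mul_pow_mul_mul_pow_sq_lt_pow_sq {a b : ℕ} (hab : a < b) (k : ℕ) :
    ∀ᶠ n : ℕ in atTop, (k * n) ^ (k * n) * a ^ n ^ 2 < b ^ n ^ 2 := by
  have hab' : |(a : ℝ)| < b := by simpa using hab
  filter_upwards [eventually_mul_pow_mul_pow_lt_pow hab' k k, eventually_ne_atTop 0] with n hn hn0
  have base_lt : (k * n) ^ k * a ^ n < b ^ n := by exact_mod_cast hn
  calc (k * n) ^ (k * n) * a ^ n ^ 2
    _ = ((k * n) ^ k * a ^ n) ^ n := by rw [mul_pow _ _ n, ← pow_mul, ← pow_mul, sq]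
    _ < (b ^ n) ^ n := Nat.pow_lt_pow_left base_lt hn0
    _ = b ^ n ^ 2 := by rw [← pow_mul, sq]

end Growth

theorem exists_isLinearHypergraph_pow_mul_pow_lt_pow (k : ℕ) {a b : ℕ} (hab : a < b) :
    ∃ (m : ℕ) (L : Type) (_ : Fintype L) (e : L → Fin k ↪ Fin m),
      IsLinearHypergraph e ∧ m ^ m * a ^ Fintype.card L < b ^ Fintype.card L := by
  have frequently_prime : ∃ᶠ p in atTop, Nat.Prime p :=
    Nat.frequently_atTop_iff_infinite.2 Nat.infinite_setOfPred_prime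
  obtain ⟨p, hp, hkp, hlt⟩ := (frequently_prime.and_eventually
    ((eventually_ge_atTop k).and (eventually_mul_pow_mul_mul_pow_sq_lt_pow_sq hab k))).exists
  have : Fact p.Prime := ⟨hp⟩
  obtain ⟨x⟩ : Nonempty (Fin k ↪ ZMod p) :=
    Embedding.nonempty_of_card_le (by simpa [ZMod.card] using hkp)
  let vertexEquiv : Fin k × ZMod p ≃ Fin (k * p) :=
    Fintype.equivFinOfCardEq (by simp [ZMod.card])
  exact ⟨k * p, ZMod p × ZMod p, inferInstance, _,
    (isLinearHypergraph_affineLine x.injective).trans_embedding vertexEquiv.toEmbedding,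
    by simpa [ZMod.card, ← sq] using hlt⟩

/-- (Rödl–Winkler) For every ordered graph `H` (on `Fin k` with its natural order) there
is an unordered graph `H'` (on some `Fin m`) such that for every strict total order `r`
on the vertices of `H'`, the ordered graph `(H', r)` contains `H` as an induced ordered
subgraph. -/
theorem rodl_winkler (k : ℕ) (H : SimpleGraph (Fin k)) :
    ∃ (m : ℕ) (H' : SimpleGraph (Fin m)),
      ∀ r : Fin m → Fin m → Prop, IsStrictTotalOrder (Fin m) r →
        ∃ φ : Fin k → Fin m,
          (∀ u v : Fin k, u < v → r (φ u) (φ v)) ∧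
          ∀ u v : Fin k, H.Adj u v ↔ H'.Adj (φ u) (φ v) := by
  obtain ⟨m, L, _, e, he, hlt⟩ := exists_isLinearHypergraph_pow_mul_pow_lt_pow k
    (Nat.sub_one_lt k.factorial_ne_zero)
  obtain ⟨c, hc⟩ := exists_perm_forall_strictTotalOrder_exists_increasing e
    (by simpa only [Fintype.card_fin] using hlt)
  refine ⟨m, ⨆ l, H.map ((c l).toEmbedding.trans (e l)), fun r hr ↦ ?_⟩
  obtain ⟨l, hl⟩ := hc r hr
  exact ⟨(c l).toEmbedding.trans (e l), hl,
    fun u v ↦ ((he.perm_trans c).iSup_map_adj_iff H l u v).symm⟩
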